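/- Let g = (g₀, g₋₁, d, [·,·], l₃) be a Lie 2-algebra over ℝ with g₀, g₋₁ finite-dimensional. For Θ ∈ Hom(g₀,g₋₁) set e^Θ := ∑_{n=1}^∞ (1/n!) Θ∘(d∘Θ)^{n−1}, and let l_{δ(Θ)}(x,y) := Θ[x,y] − [x,Θy] − [Θx,y]. Then ∂(e^Θ) = e^{d̄(Θ)}; explicitly: (1) id_{g₀} + d∘e^Θ = exp(d∘Θ); (2) id_{g₋₁} + e^Θ∘d = exp(Θ∘d); (3) for all x,y ∈ g₀: ∑_{n=1}^∞ (1/n!) ∑_{i+j+k=n−1, i,j,k≥0} C(i+j,i) · (Θ∘d)ᵏ( l_{δ(Θ)}((d∘Θ)ⁱ x, (d∘Θ)ʲ y) ) = e^Θ[x,y] − [e^Θ x, y] − [x, e^Θ y] − [e^Θ x, d e^Θ y], i.e. the expression on the left equals l^{id}_{e^Θ}(x,y). -/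

import Mathlib

open LinearMap

/-- A (semistrict) Lie 2-algebra `g = (g₀ ⊕ g₋₁, d, [·,·], l₃)` over a field `F`:
a linear map `d : g₋₁ → g₀`, a skew-symmetric bracket `b0` on `g₀`, a mixed
bracket `b1 : g₀ × g₋₁ → g₋₁` (with `[a,x] := -[x,a]`), and an alternating
trilinear `l3 : g₀³ → g₋₁` satisfying axioms (a), (b), (c). -/
structure LieTwoAlg (F : Type*) [Field F] (g0 gm : Type*)
    [AddCommGroup g0] [Module F g0] [AddCommGroup gm] [Module F gm] where
  d : gm →ₗ[F] g0
  b0 : g0 →ₗ[F] g0 →ₗ[F] g0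
  b1 : g0 →ₗ[F] gm →ₗ[F] gm
  l3 : g0 →ₗ[F] g0 →ₗ[F] g0 →ₗ[F] gm
  b0_skew : ∀ x y, b0 x y = - b0 y x
  l3_alt₁ : ∀ x y, l3 x x y = 0
  l3_alt₂ : ∀ x y, l3 x y y = 0
  ax_a1 : ∀ x a, d (b1 x a) = b0 x (d a)
  ax_a2 : ∀ a b, b1 (d a) b = - b1 (d b) a
  ax_b1 : ∀ x y z, b0 (b0 x y) z + b0 (b0 y z) x + b0 (b0 z x) y = - d (l3 x y z)
  ax_b2 : ∀ x y a, b1 (b0 x y) a - b1 x (b1 y a) + b1 y (b1 x a) = - l3 x y (d a)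
  ax_c : ∀ x y z w,
    l3 (b0 x y) z w + l3 (b0 y z) w x + l3 (b0 z w) x y + l3 (b0 w x) y z
      = -(b1 w (l3 x y z) + b1 x (l3 y z w) + b1 y (l3 z w x) + b1 z (l3 w x y))

/-- A derivation of degree 0 of the (raw) Lie 2-algebra data `(d, b0, b1, l3)`:
a triple `(X0, X1, lX)` with `X0 ∘ d = d ∘ X1` and `lX` alternating bilinear,
satisfying conditions (a), (b), (c) of Definition 3.2. -/
structure IsDer0 {F : Type*} [Field F] {g0 gm : Type*}
    [AddCommGroup g0] [Module F g0] [AddCommGroup gm] [Module F gm]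
    (d : gm →ₗ[F] g0) (b0 : g0 →ₗ[F] g0 →ₗ[F] g0) (b1 : g0 →ₗ[F] gm →ₗ[F] gm)
    (l3 : g0 →ₗ[F] g0 →ₗ[F] g0 →ₗ[F] gm)
    (X0 : g0 →ₗ[F] g0) (X1 : gm →ₗ[F] gm) (lX : g0 →ₗ[F] g0 →ₗ[F] gm) : Prop where
  comm : X0 ∘ₗ d = d ∘ₗ X1
  alt : ∀ x, lX x x = 0
  der_a : ∀ x y, d (lX x y) = X0 (b0 x y) - b0 (X0 x) y - b0 x (X0 y)
  der_b : ∀ x a, lX x (d a) = X1 (b1 x a) - b1 (X0 x) a - b1 x (X1 a)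
  der_c : ∀ x y z, X1 (l3 x y z) =
      lX x (b0 y z) + lX y (b0 z x) + lX z (b0 x y)
      + b1 x (lX y z) + b1 y (lX z x) + b1 z (lX x y)
      + l3 (X0 x) y z + l3 (X0 y) z x + l3 (X0 z) x y

/-- `(L_X ω)(x,y) = X₁(ω(x,y)) − ω(X₀x,y) − ω(x,X₀y)`. -/
def Lop {F : Type*} [Field F] {g0 gm : Type*}
    [AddCommGroup g0] [Module F g0] [AddCommGroup gm] [Module F gm]
    (X0 : g0 →ₗ[F] g0) (X1 : gm →ₗ[F] gm) (ω : g0 →ₗ[F] g0 →ₗ[F] gm) :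
    g0 →ₗ[F] g0 →ₗ[F] gm :=
  ω.compr₂ X1 - ω ∘ₗ X0 - ω.compl₂ X0

/-- `l_{δ(Θ)}(x,y) = Θ[x,y] − [x,Θy] − [Θx,y]`. -/
def ldelta {F : Type*} [Field F] {g0 gm : Type*}
    [AddCommGroup g0] [Module F g0] [AddCommGroup gm] [Module F gm]
    (G : LieTwoAlg F g0 gm) (Θ : g0 →ₗ[F] gm) : g0 →ₗ[F] g0 →ₗ[F] gm :=
  G.b0.compr₂ Θ - G.b1.compl₂ Θ + (G.b1.compl₂ Θ).flip

/-- The exponential `exp(X) m = ∑ Xⁿm/n!` of a linear endomorphism. -/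
noncomputable def expv {M : Type*} [NormedAddCommGroup M] [NormedSpace ℝ M]
    (X : M →ₗ[ℝ] M) (m : M) : M :=
  ∑' n : ℕ, ((n.factorial : ℝ))⁻¹ • (X ^ n) m

/-- The series
`E(t)(x,y) = ∑_{n≥1} (tⁿ/n!) ∑_{i+j+k=n−1} C(i+j,i) X₁ᵏ l_X(X₀ⁱx, X₀ʲy)`. -/
noncomputable def Eser {g0 gm : Type*}
    [NormedAddCommGroup g0] [NormedSpace ℝ g0]
    [NormedAddCommGroup gm] [NormedSpace ℝ gm]
    (X0 : g0 →ₗ[ℝ] g0) (X1 : gm →ₗ[ℝ] gm) (lX : g0 →ₗ[ℝ] g0 →ₗ[ℝ] gm)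
    (t : ℝ) (x y : g0) : gm :=
  ∑' n : ℕ, (t ^ (n + 1) / ((n + 1).factorial : ℝ)) •
    ∑ c ∈ Finset.Nat.antidiagonalTuple 3 n,
      (((c 0 + c 1).choose (c 0) : ℝ)) •
        (X1 ^ (c 2)) (lX ((X0 ^ (c 0)) x) ((X0 ^ (c 1)) y))

/-- The series `e^{tΘ} = ∑_{n≥1} (tⁿ/n!) Θ∘(d∘Θ)^{n−1}`, applied to `x`. -/
noncomputable def eTh {g0 gm : Type*}
    [NormedAddCommGroup g0] [NormedSpace ℝ g0]
    [NormedAddCommGroup gm] [NormedSpace ℝ gm]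
    (d : gm →ₗ[ℝ] g0) (Θ : g0 →ₗ[ℝ] gm) (t : ℝ) (x : g0) : gm :=
  ∑' n : ℕ, (t ^ (n + 1) / ((n + 1).factorial : ℝ)) • Θ (((d ∘ₗ Θ) ^ n) x)

section Helpers

open Finset

lemma sum_tuple_three {M : Type*} [AddCommMonoid M] (F : ℕ → ℕ → ℕ → M) (n : ℕ) :
    ∑ c ∈ Finset.Nat.antidiagonalTuple 3 n, F (c 0) (c 1) (c 2)
      = ∑ p ∈ antidiagonal n, ∑ q ∈ antidiagonal p.1, F q.1 q.2 p.2 := by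
  rw [Finset.sum_sigma']
  refine Finset.sum_bij' (fun c _ => ⟨(c 0 + c 1, c 2), (c 0, c 1)⟩)
    (fun s _ => ![s.2.1, s.2.2, s.1.2]) ?_ ?_ ?_ ?_ ?_
  · intro c hc
    rw [Finset.Nat.mem_antidiagonalTuple, Fin.sum_univ_three] at hc
    simp [hc]
  · rintro ⟨⟨a, b⟩, ⟨i, j⟩⟩ hs
    simp only [mem_sigma, HasAntidiagonal.mem_antidiagonal] at hs
    rw [Finset.Nat.mem_antidiagonalTuple, Fin.sum_univ_three]
    simp
    omega
  · intro c hc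
    ext i
    fin_cases i <;> rfl
  · rintro ⟨⟨a, b⟩, ⟨i, j⟩⟩ hs
    simp only [mem_sigma, HasAntidiagonal.mem_antidiagonal] at hs
    obtain ⟨h1, h2⟩ := hs
    subst h2
    rfl
  · intro c hc
    rfl

lemma sum_pascal {M : Type*} [AddCommGroup M] [Module ℝ M] (f : ℕ → ℕ → M) (n : ℕ) :
    ∑ p ∈ antidiagonal (n + 1), (((p.1 + p.2).choose p.1 : ℕ) : ℝ) • f p.1 p.2
      = ∑ p ∈ antidiagonal n, (((p.1 + p.2).choose p.1 : ℕ) : ℝ) • (f p.1 (p.2 + 1) + f (p.1 + 1) p.2) := by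
  have h := Finset.sum_antidiagonal_choose_succ_nsmul f n
  have e1 : ∑ p ∈ antidiagonal (n + 1), (((p.1 + p.2).choose p.1 : ℕ) : ℝ) • f p.1 p.2
      = ∑ p ∈ antidiagonal (n + 1), (n + 1).choose p.1 • f p.1 p.2 := by
    refine sum_congr rfl fun p hp => ?_
    rw [HasAntidiagonal.mem_antidiagonal.1 hp, Nat.cast_smul_eq_nsmul]
  rw [e1, h, ← sum_add_distrib]
  refine sum_congr rfl fun p hp => ?_
  have hp' := HasAntidiagonal.mem_antidiagonal.1 hp
  rw [n.choose_symm_of_eq_add hp'.symm, hp', Nat.cast_smul_eq_nsmul, smul_add,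
    n.choose_symm_of_eq_add hp'.symm]

/-- Auxiliary family of brackets. -/
noncomputable def hfam {g0 gm : Type*} [AddCommGroup g0] [Module ℝ g0] [AddCommGroup gm] [Module ℝ gm]
    (G : LieTwoAlg ℝ g0 gm) (Θ : g0 →ₗ[ℝ] gm) (x y : g0) : ℕ → ℕ → gm
  | 0, 0 => 0
  | 0, j + 1 => - G.b1 x (Θ (((G.d ∘ₗ Θ) ^ j) y))
  | i + 1, j => G.b1 (((G.d ∘ₗ Θ) ^ j) y) (Θ (((G.d ∘ₗ Θ) ^ i) x))

section alg
variable {g0 gm : Type*} [AddCommGroup g0] [Module ℝ g0] [AddCommGroup gm] [Module ℝ gm]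
    (G : LieTwoAlg ℝ g0 gm) (Θ : g0 →ₗ[ℝ] gm) (x y : g0)

lemma pow_succ_app (j : ℕ) : ((G.d ∘ₗ Θ) ^ (j + 1)) y = G.d (Θ (((G.d ∘ₗ Θ) ^ j) y)) := by
  rw [pow_succ', Module.End.mul_apply, LinearMap.comp_apply]

lemma hfam_right (i j : ℕ) :
    hfam G Θ x y i (j + 1) = - G.b1 (((G.d ∘ₗ Θ) ^ i) x) (Θ (((G.d ∘ₗ Θ) ^ j) y)) := by
  cases i with
  | zero => simp [hfam]
  | succ i =>
    simp only [hfam]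
    rw [pow_succ_app, pow_succ_app, G.ax_a2]

lemma d_hfam (i j : ℕ) (h : i + j ≠ 0) :
    G.d (hfam G Θ x y i j) = - G.b0 (((G.d ∘ₗ Θ) ^ i) x) (((G.d ∘ₗ Θ) ^ j) y) := by
  rcases j with _ | j
  · rcases i with _ | i
    · simp at h
    · simp only [hfam]
      rw [G.ax_a1, ← pow_succ_app, G.b0_skew]
  · rw [hfam_right, map_neg, G.ax_a1, ← pow_succ_app]

lemma ldelta_hfam (i j : ℕ) :
    ldelta G Θ (((G.d ∘ₗ Θ) ^ i) x) (((G.d ∘ₗ Θ) ^ j) y)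
      = Θ (G.b0 (((G.d ∘ₗ Θ) ^ i) x) (((G.d ∘ₗ Θ) ^ j) y))
        + (hfam G Θ x y i (j + 1) + hfam G Θ x y (i + 1) j) := by
  rw [hfam_right]
  simp only [ldelta, hfam, LinearMap.add_apply, LinearMap.sub_apply, LinearMap.compr₂_apply,
    LinearMap.compl₂_apply, LinearMap.flip_apply]
  abel

lemma coeff_identity (n : ℕ) :
    ∑ c ∈ Finset.Nat.antidiagonalTuple 3 n,
          (((c 0 + c 1).choose (c 0) : ℝ)) •
            ((Θ ∘ₗ G.d) ^ (c 2))
              (ldelta G Θ (((G.d ∘ₗ Θ) ^ (c 0)) x) (((G.d ∘ₗ Θ) ^ (c 1)) y))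
      = Θ (((G.d ∘ₗ Θ) ^ n) (G.b0 x y))
        + ∑ p ∈ antidiagonal (n + 1), (((p.1 + p.2).choose p.1 : ℕ) : ℝ) • hfam G Θ x y p.1 p.2 := by
  rw [sum_tuple_three (fun i j k => (((i + j).choose i : ℕ) : ℝ) • ((Θ ∘ₗ G.d) ^ k)
              (ldelta G Θ (((G.d ∘ₗ Θ) ^ i) x) (((G.d ∘ₗ Θ) ^ j) y)))]
  induction n with
  | zero =>
    rw [sum_pascal]
    simp only [Finset.Nat.antidiagonal_zero, sum_singleton, pow_zero, Module.End.one_apply]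
    have := ldelta_hfam G Θ x y 0 0
    simp only [pow_zero, Module.End.one_apply] at this
    simp [this]
  | succ n ih =>
    rw [Finset.Nat.sum_antidiagonal_succ']
    have e : ∑ p ∈ antidiagonal n, ∑ q ∈ antidiagonal p.1,
        (((q.1 + q.2).choose q.1 : ℕ) : ℝ) • ((Θ ∘ₗ G.d) ^ (p.2 + 1))
              (ldelta G Θ (((G.d ∘ₗ Θ) ^ q.1) x) (((G.d ∘ₗ Θ) ^ q.2) y))
        = Θ (G.d (∑ p ∈ antidiagonal n, ∑ q ∈ antidiagonal p.1,
        (((q.1 + q.2).choose q.1 : ℕ) : ℝ) • ((Θ ∘ₗ G.d) ^ p.2)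
              (ldelta G Θ (((G.d ∘ₗ Θ) ^ q.1) x) (((G.d ∘ₗ Θ) ^ q.2) y)))) := by
      simp only [map_sum, map_smul]
      refine sum_congr rfl fun p _ => sum_congr rfl fun q _ => ?_
      rw [pow_succ', Module.End.mul_apply, LinearMap.comp_apply]
    dsimp only
    rw [e, ih, sum_pascal _ (n + 1)]
    simp only [pow_zero, Module.End.one_apply, ldelta_hfam, smul_add, sum_add_distrib, map_add,
      pow_succ_app]
    have e2 : Θ (G.d (∑ p ∈ antidiagonal (n + 1),
        (((p.1 + p.2).choose p.1 : ℕ) : ℝ) • hfam G Θ x y p.1 p.2))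
        = - ∑ p ∈ antidiagonal (n + 1), (((p.1 + p.2).choose p.1 : ℕ) : ℝ) •
          Θ (G.b0 (((G.d ∘ₗ Θ) ^ p.1) x) (((G.d ∘ₗ Θ) ^ p.2) y)) := by
      simp only [map_sum, map_smul]
      rw [← sum_neg_distrib]
      refine sum_congr rfl fun p hp => ?_
      rw [d_hfam _ _ _ _ _ _ (by rw [HasAntidiagonal.mem_antidiagonal.1 hp]; omega), map_neg, smul_neg]
    rw [e2]
    abel

end alg

section ana
variable {g0 gm : Type*}
    [NormedAddCommGroup g0] [NormedSpace ℝ g0] [FiniteDimensional ℝ g0]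
    [NormedAddCommGroup gm] [NormedSpace ℝ gm] [FiniteDimensional ℝ gm]

lemma norm_pow_app_le (X : g0 →ₗ[ℝ] g0) : ∃ C : ℝ, 0 ≤ C ∧ ∀ (n : ℕ) (x : g0), ‖(X ^ n) x‖ ≤ C ^ n * ‖x‖ := by
  refine ⟨‖LinearMap.toContinuousLinearMap X‖, norm_nonneg _, fun n x => ?_⟩
  induction n with
  | zero => simp
  | succ n ih =>
    rw [pow_succ', Module.End.mul_apply, pow_succ', mul_assoc]
    exact ((LinearMap.toContinuousLinearMap X).le_opNorm _).trans (by gcongr)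

lemma summable_norm_exp (X : g0 →ₗ[ℝ] g0) (x : g0) :
    Summable fun n : ℕ => ‖((n.factorial : ℝ))⁻¹ • (X ^ n) x‖ := by
  obtain ⟨C, hC, h⟩ := norm_pow_app_le X
  refine Summable.of_nonneg_of_le (fun _ => norm_nonneg _) (fun n => ?_)
    ((Real.summable_pow_div_factorial C).mul_right ‖x‖)
  rw [norm_smul, norm_inv, RCLike.norm_natCast, div_mul_eq_mul_div, div_eq_inv_mul]
  gcongr
  exact h n x

lemma summable_norm_eTh (X : g0 →ₗ[ℝ] g0) (Θ : g0 →ₗ[ℝ] gm) (x : g0) :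
    Summable fun n : ℕ => ‖(((n + 1).factorial : ℝ))⁻¹ • Θ ((X ^ n) x)‖ := by
  refine Summable.of_nonneg_of_le (fun _ => norm_nonneg _) (fun n => ?_)
    ((summable_norm_exp X x).mul_left ‖LinearMap.toContinuousLinearMap Θ‖)
  have h1 := (LinearMap.toContinuousLinearMap Θ).le_opNorm ((X ^ n) x)
  rw [norm_smul, norm_smul, norm_inv, norm_inv, RCLike.norm_natCast, RCLike.norm_natCast, mul_left_comm]
  have h2 : (n.factorial : ℝ) ≤ ((n + 1).factorial : ℝ) := by
    exact_mod_cast Nat.factorial_le (Nat.le_succ n)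
  have h3 : (0 : ℝ) < n.factorial := by exact_mod_cast Nat.factorial_pos n
  gcongr
  exact h1

lemma hasSum_eTh (d : gm →ₗ[ℝ] g0) (Θ : g0 →ₗ[ℝ] gm) (x : g0) :
    HasSum (fun n : ℕ => (((n + 1).factorial : ℝ))⁻¹ • Θ (((d ∘ₗ Θ) ^ n) x)) (eTh d Θ 1 x) := by
  have := (summable_norm_eTh (d ∘ₗ Θ) Θ x).of_norm.hasSum
  simpa [eTh] using this

lemma hasSum_map (L : g0 →ₗ[ℝ] gm) {f : ℕ → g0} {s : g0} (h : HasSum f s) :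
    HasSum (fun n => L (f n)) (L s) :=
  (LinearMap.toContinuousLinearMap L).hasSum h

lemma hasSum_exp (X : g0 →ₗ[ℝ] g0) (x : g0) :
    HasSum (fun n : ℕ => ((n.factorial : ℝ))⁻¹ • (X ^ n) x) (expv X x) :=
  (summable_norm_exp X x).of_norm.hasSum

lemma part_one (d : gm →ₗ[ℝ] g0) (Θ : g0 →ₗ[ℝ] gm) (x : g0) :
    x + d (eTh d Θ 1 x) = expv (d ∘ₗ Θ) x := by
  have h := hasSum_map d (hasSum_eTh d Θ x)
  have h2 := (hasSum_nat_add_iff' 1).2 (hasSum_exp (d ∘ₗ Θ) x)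
  have e : ∀ n : ℕ, d (Θ (((d ∘ₗ Θ) ^ n) x)) = ((d ∘ₗ Θ) ^ (n + 1)) x := by
    intro n
    rw [pow_succ', Module.End.mul_apply, LinearMap.comp_apply]
  simp only [map_smul, e] at h
  rw [h.unique h2]; simp

lemma part_two (d : gm →ₗ[ℝ] g0) (Θ : g0 →ₗ[ℝ] gm) (a : gm) :
    a + eTh d Θ 1 (d a) = expv (Θ ∘ₗ d) a := by
  have h := hasSum_eTh d Θ (d a)
  have h2 := (hasSum_nat_add_iff' 1).2 (hasSum_exp (Θ ∘ₗ d) a)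
  have e : ∀ n : ℕ, Θ (((d ∘ₗ Θ) ^ n) (d a)) = ((Θ ∘ₗ d) ^ (n + 1)) a := by
    intro n
    induction n with
    | zero => simp
    | succ n ih =>
      rw [pow_succ', Module.End.mul_apply, LinearMap.comp_apply, ih, pow_succ' _ (n + 1),
        Module.End.mul_apply, LinearMap.comp_apply]
  simp only [e] at h
  rw [h.unique h2]; simp

lemma hasSum_bilin (b : g0 →ₗ[ℝ] gm →ₗ[ℝ] gm) {f : ℕ → g0} {g : ℕ → gm} {s : g0} {t : gm}
    (hf : HasSum f s) (hg : HasSum g t) (hf' : Summable fun n => ‖f n‖)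
    (hg' : Summable fun n => ‖g n‖) :
    HasSum (fun n => ∑ p ∈ antidiagonal n, b (f p.2) (g p.1)) (b s t) := by
  let B : g0 →L[ℝ] gm →L[ℝ] gm := LinearMap.toContinuousLinearMap
    ((LinearMap.toContinuousLinearMap : (gm →ₗ[ℝ] gm) ≃ₗ[ℝ] (gm →L[ℝ] gm)).toLinearMap ∘ₗ b)
  have hB : ∀ u v, b u v = B u v := fun u v => rfl
  have hs : Summable fun p : ℕ × ℕ => b (f p.2) (g p.1) := by
    refine Summable.of_norm_bounded
      ((Summable.mul_of_nonneg hg' hf' (fun _ => norm_nonneg _) (fun _ => norm_nonneg _)).mul_left ‖B‖)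
      (fun p => ?_)
    rw [hB]
    refine (B.le_opNorm₂ _ _).trans (le_of_eq ?_)
    ring
  have h1 : HasSum (fun p : ℕ × ℕ => b (f p.2) (g p.1)) (b s t) := by
    have h2 := hs.hasSum.prod_fiberwise (g := fun i => b s (g i))
      (fun i => (hasSum_map (b.flip (g i)) hf))
    have h3 : HasSum (fun i => b s (g i)) (b s t) := hasSum_map (b s) hg
    rw [← h2.unique h3]
    exact hs.hasSum
  have h4 := (Finset.HasAntidiagonal.sigmaAntidiagonalEquivProd (A := ℕ)).hasSum_iff.2 h1
  refine HasSum.sigma h4 (fun n => ?_)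
  rw [← Finset.sum_coe_sort]
  exact hasSum_fintype _

lemma part_three (G : LieTwoAlg ℝ g0 gm) (Θ : g0 →ₗ[ℝ] gm) (x y : g0) :
      (∑' n : ℕ, (((n + 1).factorial : ℝ))⁻¹ •
        ∑ c ∈ Finset.Nat.antidiagonalTuple 3 n,
          (((c 0 + c 1).choose (c 0) : ℝ)) •
            ((Θ ∘ₗ G.d) ^ (c 2))
              (ldelta G Θ (((G.d ∘ₗ Θ) ^ (c 0)) x) (((G.d ∘ₗ Θ) ^ (c 1)) y)))
      = eTh G.d Θ 1 (G.b0 x y)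
        - G.b1 x (eTh G.d Θ 1 y)
        + G.b1 y (eTh G.d Θ 1 x)
        + G.b1 (G.d (eTh G.d Θ 1 y)) (eTh G.d Θ 1 x) := by
  have h1 := hasSum_eTh G.d Θ (G.b0 x y)
  have h2 := (hasSum_map (G.b1 x) (hasSum_eTh G.d Θ y)).neg
  have h3 := hasSum_bilin G.b1 (hasSum_exp (G.d ∘ₗ Θ) y) (hasSum_eTh G.d Θ x)
    (summable_norm_exp _ _) (summable_norm_eTh _ _ _)
  have h4 := (h1.add h2).add h3
  rw [← part_one, map_add, LinearMap.add_apply] at h4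
  refine HasSum.tsum_eq ?_
  convert h4 using 1
  · funext n
    rw [coeff_identity, Finset.Nat.sum_antidiagonal_succ, smul_add, smul_add, ← add_assoc]
    congr 1
    · simp [hfam]
    · rw [Finset.smul_sum]
      refine sum_congr rfl fun p hp => ?_
      have hp' := HasAntidiagonal.mem_antidiagonal.1 hp
      simp only [hfam, map_smul, LinearMap.smul_apply, smul_smul]
      congr 1
      have := Nat.choose_mul_factorial_mul_factorial (show p.1 + 1 ≤ n + 1 by omega)
      rw [show n + 1 - (p.1 + 1) = p.2 by omega] at this
      rw [show p.1 + 1 + p.2 = n + 1 by omega]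
      have h : ((n + 1).choose (p.1 + 1) : ℝ) * ((p.1 + 1).factorial : ℝ) * (p.2.factorial : ℝ)
        = ((n + 1).factorial : ℝ) := by exact_mod_cast this
      have k1 : ((p.1 + 1).factorial : ℝ) ≠ 0 := by exact_mod_cast Nat.factorial_ne_zero _
      have k2 : (p.2.factorial : ℝ) ≠ 0 := by exact_mod_cast Nat.factorial_ne_zero _
      have k3 : ((n + 1).factorial : ℝ) ≠ 0 := by exact_mod_cast Nat.factorial_ne_zero _
      field_simp
      linarith
  · abel

end ana

end Helpers

/-- the exponential maps commute with the differentials,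
`∂(e^Θ) = e^{d̄(Θ)}`, componentwise: (1) `id + d∘e^Θ = exp(d∘Θ)`;
(2) `id + e^Θ∘d = exp(Θ∘d)`; (3) the series `e^{l_{δ(Θ)}}` equals
`l^{id}_{e^Θ}(x,y) = e^Θ[x,y] − [e^Θx,y] − [x,e^Θy] − [e^Θx, d e^Θ y]`. -/
theorem partial_exp_eq_exp_dbar
    {g0 gm : Type*}
    [NormedAddCommGroup g0] [NormedSpace ℝ g0] [FiniteDimensional ℝ g0]
    [NormedAddCommGroup gm] [NormedSpace ℝ gm] [FiniteDimensional ℝ gm]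
    (G : LieTwoAlg ℝ g0 gm) (Θ : g0 →ₗ[ℝ] gm) :
    (∀ x : g0, x + G.d (eTh G.d Θ 1 x) = expv (G.d ∘ₗ Θ) x) ∧
    (∀ a : gm, a + eTh G.d Θ 1 (G.d a) = expv (Θ ∘ₗ G.d) a) ∧
    (∀ x y : g0,
      (∑' n : ℕ, (((n + 1).factorial : ℝ))⁻¹ •
        ∑ c ∈ Finset.Nat.antidiagonalTuple 3 n,
          (((c 0 + c 1).choose (c 0) : ℝ)) •
            ((Θ ∘ₗ G.d) ^ (c 2))
              (ldelta G Θ (((G.d ∘ₗ Θ) ^ (c 0)) x) (((G.d ∘ₗ Θ) ^ (c 1)) y)))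
      = eTh G.d Θ 1 (G.b0 x y)
        - G.b1 x (eTh G.d Θ 1 y)
        + G.b1 y (eTh G.d Θ 1 x)
        + G.b1 (G.d (eTh G.d Θ 1 y)) (eTh G.d Θ 1 x)) := by
  exact ⟨part_one G.d Θ, part_two G.d Θ, part_three G Θ⟩
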